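/- Let U be an open subset of a complex Banach space E such that continuous polynomials are dense in H_b(U). If z ∈ (U_n)̂_P for some n ∈ ℕ, then there exists a continuous character φ of H_b(U) satisfying |φ(f)| ≤ sup_{x∈U_n}|f(x)| for all f ∈ H_b(U) and φ(f|_U) = f(z) for every f ∈ H_b(E). In particular every point of Û_P is an evaluation point for H_b(U). -/

import Mathlib

/-!
The evaluation at `z` of a continuous polynomial is controlled by its values on `A = U_n`, since `z`
lies in the polynomial hull of `A`. It therefore extends by uniform continuity to all functions that
are uniform limits on `A` of continuous polynomials, and by density this covers `H_b(U)`. The value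
`w` of the extension at `f` is characterised by `‖w - P z‖ ≤ sup_A ‖f - P‖` for every continuous
polynomial `P` (`IsExtVal`); existence is completeness of `ℂ`, and linearity, multiplicativity and
the norm bound follow by approximation, because continuous polynomials form an algebra.

For `f ∈ H_b(E)` the extension agrees with `f z` because the Taylor polynomials of `f` at `0`
converge to `f` uniformly on bounded sets (`MemHb.exists_taylor`). Indeed, on a complex line
`ζ ↦ ζ • x` with `‖x‖ ≤ r`, Cauchy's estimate on the circle of radius `2` bounds the `k`-th
Taylor term at `x` by `2⁻ᵏ sup_{‖y‖ ≤ 2r} ‖f y‖`.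
-/


open Set Metric

variable {E : Type*} [NormedAddCommGroup E] [NormedSpace ℂ E]

/-- A continuous `n`-homogeneous polynomial: `x ↦ M (x, …, x)` for a continuous `n`-linear map. -/
def IsHomogPoly (n : ℕ) (Q : E → ℂ) : Prop :=
  ∃ M : ContinuousMultilinearMap ℂ (fun _ : Fin n => E) ℂ, ∀ x, Q x = M fun _ => x

/-- A continuous polynomial: a finite sum of continuous homogeneous polynomials. -/
def IsContPoly (P : E → ℂ) : Prop :=
  ∃ (N : ℕ) (Q : ℕ → E → ℂ), (∀ k, IsHomogPoly k (Q k)) ∧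
    ∀ x, P x = ∑ k ∈ Finset.range (N + 1), Q k x

/-- `A` is `U`-bounded: contained in `U`, norm bounded, uniformly away from the boundary. -/
def UBounded (U A : Set E) : Prop :=
  A ⊆ U ∧ Bornology.IsBounded A ∧ ∃ d > 0, ∀ a ∈ A, ball a d ⊆ U

/-- `f` is in `H_b(U)`: analytic on `U` and bounded on every `U`-bounded set. -/
def MemHb (U : Set E) (f : E → ℂ) : Prop :=
  AnalyticOnNhd ℂ f U ∧ ∀ A : Set E, UBounded U A → ∃ C : ℝ, ∀ x ∈ A, ‖f x‖ ≤ C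

/-- Polynomial hull `Â_P` of a set `A`: points where each continuous polynomial is dominated by
its sup over `A` (formulated via upper bounds). -/
def polyHull (A : Set E) : Set E :=
  {x | ∀ P : E → ℂ, IsContPoly P → ∀ C : ℝ, (∀ a ∈ A, ‖P a‖ ≤ C) → ‖P x‖ ≤ C}

/-- The set `U_n = {x ∈ U : ‖x‖ ≤ n, ball x (1/n) ⊆ U}`. -/
def UNat (U : Set E) (n : ℕ) : Set E :=
  {x | x ∈ U ∧ ‖x‖ ≤ (n : ℝ) ∧ ball x (1 / (n : ℝ)) ⊆ U}

/-- `Û_P := ⋃ n, (U_n)̂_P`. -/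
def UhatP (U : Set E) : Set E := ⋃ n : ℕ, polyHull (UNat U n)

/-- A continuous character of `H_b(U)`. -/
def IsHbChar (U : Set E) (φ : (E → ℂ) → ℂ) : Prop :=
  φ (fun _ => 1) = 1 ∧
  (∀ f g, MemHb U f → MemHb U g → φ (f + g) = φ f + φ g) ∧
  (∀ (c : ℂ) (f), MemHb U f → φ (c • f) = c * φ f) ∧
  (∀ f g, MemHb U f → MemHb U g → φ (f * g) = φ f * φ g) ∧
  ∃ B : Set E, UBounded U B ∧
    ∀ f, MemHb U f → ∀ C : ℝ, (∀ x ∈ B, ‖f x‖ ≤ C) → ‖φ f‖ ≤ C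

/-- `U` is `H_b(U)`-convex. -/
def HbConvex (U : Set E) : Prop :=
  ∀ A : Set E, UBounded U A →
    UBounded U {x ∈ U | ∀ f, MemHb U f → ∀ C : ℝ, (∀ a ∈ A, ‖f a‖ ≤ C) → ‖f x‖ ≤ C}

/-- Continuous polynomials are dense in `H_b(U)`. -/
def PolysDense (U : Set E) : Prop :=
  ∀ f, MemHb U f → ∀ A : Set E, UBounded U A → ∀ ε > 0,
    ∃ P : E → ℂ, IsContPoly P ∧ ∀ x ∈ A, ‖f x - P x‖ ≤ ε

/-! ### The algebra of continuous polynomials -/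

section Poly

lemma IsHomogPoly.zero (n : ℕ) : IsHomogPoly n (0 : E → ℂ) := ⟨0, fun x => by simp⟩

lemma IsHomogPoly.add {n : ℕ} {P Q : E → ℂ} (hP : IsHomogPoly n P) (hQ : IsHomogPoly n Q) :
    IsHomogPoly n (P + Q) := by
  obtain ⟨M, hM⟩ := hP
  obtain ⟨N, hN⟩ := hQ
  exact ⟨M + N, fun x => by simp [hM, hN]⟩

lemma IsHomogPoly.const_smul {n : ℕ} {P : E → ℂ} (c : ℂ) (hP : IsHomogPoly n P) :
    IsHomogPoly n (c • P) := by
  obtain ⟨M, hM⟩ := hP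
  exact ⟨c • M, fun x => by simp [hM]⟩

lemma IsHomogPoly.mul {m n : ℕ} {P Q : E → ℂ} (hP : IsHomogPoly m P) (hQ : IsHomogPoly n Q) :
    IsHomogPoly (m + n) (P * Q) := by
  obtain ⟨M, hM⟩ := hP
  obtain ⟨N, hN⟩ := hQ
  refine ⟨{ toMultilinearMap := ((LinearMap.mul' ℂ ℂ).compMultilinearMap
              (M.toMultilinearMap.domCoprod N.toMultilinearMap)).domDomCongr finSumFinEquiv
            cont := ?_ }, fun x => ?_⟩
  · change Continuous fun v : Fin (m + n) → E =>
      M (fun i => v (finSumFinEquiv (Sum.inl i))) * N (fun i => v (finSumFinEquiv (Sum.inr i)))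
    fun_prop
  · change P x * Q x = M (fun _ => x) * N (fun _ => x)
    rw [hM, hN]

lemma IsHomogPoly.isContPoly {n : ℕ} {P : E → ℂ} (hP : IsHomogPoly n P) : IsContPoly P := by
  refine ⟨n, fun k => if k = n then P else 0, fun k => ?_, fun x => ?_⟩
  · dsimp only
    split_ifs with h
    · exact h ▸ hP
    · exact .zero k
  · rw [Finset.sum_eq_single n] <;> simp +contextual

lemma IsContPoly.const (c : ℂ) : IsContPoly (fun _ : E => c) :=
  IsHomogPoly.isContPoly (n := 0)
    ⟨ContinuousMultilinearMap.constOfIsEmpty ℂ _ c, fun x => by simp⟩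

lemma IsContPoly.add {P Q : E → ℂ} (hP : IsContPoly P) (hQ : IsContPoly Q) :
    IsContPoly (P + Q) := by
  obtain ⟨N₁, Q₁, h₁, e₁⟩ := hP
  obtain ⟨N₂, Q₂, h₂, e₂⟩ := hQ
  have key : ∀ (N L : ℕ) (R : ℕ → E → ℂ) (x : E), N ≤ L →
      ∑ k ∈ Finset.range (L + 1), (if k ≤ N then R k else 0) x
        = ∑ k ∈ Finset.range (N + 1), R k x := by
    intro N L R x h
    rw [← Finset.sum_subset (Finset.range_subset_range.2 (Nat.succ_le_succ h))]
    · refine Finset.sum_congr rfl fun k hk => ?_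
      rw [if_pos (Nat.lt_succ_iff.1 (Finset.mem_range.1 hk))]
    · intro k _ hk
      rw [if_neg (by simpa [Nat.lt_succ_iff] using hk)]
      rfl
  refine ⟨max N₁ N₂, fun k => (if k ≤ N₁ then Q₁ k else 0) + (if k ≤ N₂ then Q₂ k else 0),
    fun k => ?_, fun x => ?_⟩
  · refine .add ?_ ?_ <;> split_ifs
    exacts [h₁ k, .zero k, h₂ k, .zero k]
  · simp only [Pi.add_apply, Finset.sum_add_distrib]
    rw [key _ _ _ _ (le_max_left _ _), key _ _ _ _ (le_max_right _ _), e₁, e₂]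

lemma IsContPoly.const_smul {P : E → ℂ} (c : ℂ) (hP : IsContPoly P) : IsContPoly (c • P) := by
  obtain ⟨N, Q, h, e⟩ := hP
  exact ⟨N, fun k => c • Q k, fun k => (h k).const_smul c, fun x => by simp [e, Finset.mul_sum]⟩

lemma IsContPoly.sub {P Q : E → ℂ} (hP : IsContPoly P) (hQ : IsContPoly Q) :
    IsContPoly (P - Q) := by
  have := hP.add (hQ.const_smul (-1))
  rwa [neg_one_smul, ← sub_eq_add_neg] at this

lemma IsContPoly.sum {ι : Type*} (s : Finset ι) (P : ι → E → ℂ) (h : ∀ i, IsContPoly (P i)) :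
    IsContPoly (∑ i ∈ s, P i) := by
  classical
  induction s using Finset.induction_on with
  | empty => exact IsContPoly.const 0
  | insert i s hi ih =>
    rw [Finset.sum_insert hi]
    exact (h i).add ih

lemma IsContPoly.mul {P Q : E → ℂ} (hP : IsContPoly P) (hQ : IsContPoly Q) :
    IsContPoly (P * Q) := by
  obtain ⟨N₁, Q₁, h₁, e₁⟩ := hP
  obtain ⟨N₂, Q₂, h₂, e₂⟩ := hQ
  have : P * Q = ∑ i ∈ Finset.range (N₁ + 1), ∑ j ∈ Finset.range (N₂ + 1), Q₁ i * Q₂ j := by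
    ext x
    simp [e₁, e₂, Finset.sum_mul_sum]
  rw [this]
  exact .sum _ _ fun i => .sum _ _ fun j => ((h₁ i).mul (h₂ j)).isContPoly

end Poly

/-! ### The algebra `H_b(U)` -/

section Hb

variable {U : Set E} {f g : E → ℂ}

lemma MemHb.const (c : ℂ) : MemHb U (fun _ => c) :=
  ⟨analyticOnNhd_const, fun _ _ => ⟨‖c‖, fun _ _ => le_rfl⟩⟩

lemma MemHb.add (hf : MemHb U f) (hg : MemHb U g) : MemHb U (f + g) := by
  refine ⟨hf.1.add hg.1, fun A hA => ?_⟩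
  obtain ⟨C, hC⟩ := hf.2 A hA
  obtain ⟨D, hD⟩ := hg.2 A hA
  exact ⟨C + D, fun x hx => (norm_add_le _ _).trans (add_le_add (hC x hx) (hD x hx))⟩

lemma MemHb.mul (hf : MemHb U f) (hg : MemHb U g) : MemHb U (f * g) := by
  refine ⟨hf.1.mul hg.1, fun A hA => ?_⟩
  obtain ⟨C, hC⟩ := hf.2 A hA
  obtain ⟨D, hD⟩ := hg.2 A hA
  refine ⟨C * D, fun x hx => ?_⟩
  rw [Pi.mul_apply, norm_mul]
  exact mul_le_mul (hC x hx) (hD x hx) (norm_nonneg _) ((norm_nonneg _).trans (hC x hx))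

lemma MemHb.const_smul (c : ℂ) (hf : MemHb U f) : MemHb U (c • f) :=
  (MemHb.const c).mul hf

lemma MemHb.of_univ (hf : MemHb univ f) : MemHb U f :=
  ⟨hf.1.mono (subset_univ U), fun A hA => hf.2 A ⟨subset_univ A, hA.2.1, 1, one_pos,
    fun _ _ => subset_univ _⟩⟩

omit [NormedSpace ℂ E] in
lemma uBounded_UNat (hU : IsOpen U) (n : ℕ) : UBounded U (UNat U n) := by
  refine ⟨fun x hx => hx.1, isBounded_iff_forall_norm_le.2 ⟨n, fun x hx => hx.2.1⟩, ?_⟩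
  rcases Nat.eq_zero_or_pos n with rfl | hn
  -- For `n = 0` the radius `1 / n` is `0`, but `UNat U 0` contains at most the origin.
  · by_cases h0 : (0 : E) ∈ U
    · obtain ⟨d, hd, hdU⟩ := Metric.isOpen_iff.1 hU 0 h0
      refine ⟨d, hd, fun a ha => ?_⟩
      have : a = 0 := by simpa using ha.2.1
      rwa [this]
    · refine ⟨1, one_pos, fun a ha => absurd ha.1 ?_⟩
      have : a = 0 := by simpa using ha.2.1
      rwa [this]
  · exact ⟨1 / n, by positivity, fun a ha => ha.2.2⟩

/-- Functions in `H_b(E)` are uniform limits of continuous polynomials on every ball. -/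
lemma MemHb.exists_taylor (hf : MemHb univ f) (r : ℝ) {ε : ℝ} (hε : 0 < ε) :
    ∃ P : E → ℂ, IsContPoly P ∧ ∀ x, ‖x‖ ≤ r → ‖f x - P x‖ ≤ ε := by
  obtain ⟨p, hp⟩ := hf.1 0 (mem_univ _)
  obtain ⟨M, hM⟩ := hf.2 (closedBall 0 (2 * r))
    ⟨subset_univ _, isBounded_closedBall, 1, one_pos, fun _ _ => subset_univ _⟩
  obtain ⟨N, hN⟩ : ∃ N : ℕ, M * (1 / 2) ^ N / (1 - 1 / 2) < ε := by
    have : Filter.Tendsto (fun N : ℕ => M * (1 / 2 : ℝ) ^ N / (1 - 1 / 2)) Filter.atTop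
        (nhds (M * 0 / (1 - 1 / 2))) :=
      ((tendsto_pow_atTop_nhds_zero_of_lt_one (by norm_num) (by norm_num)).const_mul M).div_const _
    exact (this.eventually_lt_const (by simpa using hε)).exists
  refine ⟨∑ k ∈ Finset.range N, fun x => p k fun _ => x,
    .sum _ _ fun k => IsHomogPoly.isContPoly ⟨p k, fun _ => rfl⟩, fun x hx => ?_⟩
  set L : ℂ →L[ℂ] E := ContinuousLinearMap.toSpanSingleton ℂ x with hL
  set g : ℂ → ℂ := f ∘ L with hg
  have hgd : Differentiable ℂ g := fun ζ =>
    ((hf.1 _ (mem_univ _)).differentiableAt).comp ζ L.differentiableAt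
  have h1 : HasFPowerSeriesAt g (p.compContinuousLinearMap L) 0 := by
    apply HasFPowerSeriesAt.compContinuousLinearMap
    simpa using hp
  have h2 := hgd.hasFPowerSeriesOnBall 0 (R := 2) (by norm_num)
  have heq := h1.eq_formalMultilinearSeries h2.hasFPowerSeriesAt
  have hcoef : ∀ k, p k (fun _ => x) = cauchyPowerSeries g 0 (2 : NNReal) k (fun _ => 1) := by
    intro k
    rw [← heq, FormalMultilinearSeries.compContinuousLinearMap_apply]
    congr 1
    ext i
    simp [hL]
  have hsum : HasSum (fun k => p k fun _ => x) (f x) := by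
    have := h2.hasSum (y := 1) (by simp)
    simp only [← hcoef] at this
    simpa [hg, hL] using this
  have hbound : ∀ k, ‖p k fun _ => x‖ ≤ M * (1 / 2) ^ k := by
    intro k
    have hgM : ∀ θ : ℝ, ‖g (circleMap 0 2 θ)‖ ≤ M := by
      intro θ
      refine hM _ ?_
      simp only [hL, ContinuousLinearMap.toSpanSingleton_apply, mem_closedBall, dist_zero_right,
        norm_smul, norm_circleMap_zero]
      norm_num
      exact hx
    have hI : (∫ θ : ℝ in (0)..2 * Real.pi, ‖g (circleMap 0 2 θ)‖) ≤ M * (2 * Real.pi) := by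
      have := intervalIntegral.norm_integral_le_of_norm_le_const (a := 0) (b := 2 * Real.pi)
        (f := fun θ => ‖g (circleMap 0 2 θ)‖) (C := M) (fun θ _ => by simpa using hgM θ)
      rw [sub_zero, abs_of_pos Real.two_pi_pos] at this
      exact (le_abs_self _).trans this
    rw [hcoef]
    refine (ContinuousMultilinearMap.le_opNorm _ _).trans ?_
    simp only [norm_one, Finset.prod_const_one, mul_one]
    refine (norm_cauchyPowerSeries_le g 0 _ k).trans ?_
    have e : |((2 : NNReal) : ℝ)|⁻¹ = 1 / 2 := by norm_num
    rw [e]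
    refine mul_le_mul_of_nonneg_right ?_ (by positivity)
    rw [inv_mul_le_iff₀ Real.two_pi_pos, mul_comm _ M]
    exact hI
  have := norm_sub_le_of_geometric_bound_of_hasSum (by norm_num) hbound hsum N
  rw [norm_sub_rev] at this
  simpa using this.trans hN.le

end Hb

/-! ### Extending the evaluation at a point of the hull -/

section Extension

variable {A : Set E} {z : E} {f g : E → ℂ}

/-- `w` is the value at `f` of the extension of `P ↦ P z` from continuous polynomials to their
uniform limits on `A`, that is, `‖w - P z‖ ≤ sup_A ‖f - P‖` for every continuous polynomial `P`. -/
def IsExtVal (A : Set E) (z : E) (f : E → ℂ) (w : ℂ) : Prop :=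
  ∀ P : E → ℂ, IsContPoly P → ∀ C : ℝ, (∀ x ∈ A, ‖f x - P x‖ ≤ C) → ‖w - P z‖ ≤ C

/-- `f` is a uniform limit on `A` of continuous polynomials. -/
def PolyApprox (A : Set E) (f : E → ℂ) : Prop :=
  ∀ ε > 0, ∃ P : E → ℂ, IsContPoly P ∧ ∀ x ∈ A, ‖f x - P x‖ ≤ ε

lemma exists_isExtVal (hz : z ∈ polyHull A) (hf : PolyApprox A f) : ∃ w, IsExtVal A z f w := by
  have hpos : ∀ k : ℕ, (0 : ℝ) < 1 / ((k : ℝ) + 1) := fun k => Nat.one_div_pos_of_nat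
  choose P hP hPf using fun k : ℕ => hf _ (hpos k)
  have hdiff : ∀ (k : ℕ) (Q : E → ℂ), IsContPoly Q → ∀ C : ℝ, (∀ x ∈ A, ‖f x - Q x‖ ≤ C) →
      ‖P k z - Q z‖ ≤ C + 1 / ((k : ℝ) + 1) := by
    intro k Q hQ C hC
    refine hz (P k - Q) ((hP k).sub hQ) _ fun x hx => ?_
    calc ‖(P k - Q) x‖ = ‖(f x - Q x) - (f x - P k x)‖ := by
          rw [Pi.sub_apply]; congr 1; ring
      _ ≤ _ := (norm_sub_le _ _).trans (add_le_add (hC x hx) (hPf k x hx))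
  have hlim := tendsto_one_div_add_atTop_nhds_zero_nat (𝕜 := ℝ)
  have hcauchy : CauchySeq fun k => P k z := by
    refine cauchySeq_of_le_tendsto_0 (fun k : ℕ => 1 / ((k : ℝ) + 1) + 1 / ((k : ℝ) + 1))
      (fun k l N hk hl => ?_) (by simpa using hlim.add hlim)
    rw [dist_eq_norm]
    refine (hdiff k (P l) (hP l) _ (hPf l)).trans (add_le_add ?_ ?_)
    · exact Nat.one_div_le_one_div hl
    · exact Nat.one_div_le_one_div hk
  obtain ⟨w, hw⟩ := cauchySeq_tendsto_of_complete hcauchy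
  refine ⟨w, fun Q hQ C hC => ?_⟩
  refine le_of_tendsto_of_tendsto' (hw.sub_const (Q z)).norm ?_ fun k => hdiff k Q hQ C hC
  simpa using hlim.const_add C

/-- Two values are equal if, for all small `ε`, both are `O(ε)`-close to a common third one. -/
lemma eq_of_forall_close {a b : ℂ} (K L : ℝ)
    (h : ∀ ε > 0, ε ≤ 1 → ∃ c, ‖a - c‖ ≤ K * ε ∧ ‖b - c‖ ≤ L * ε) : a = b := by
  rw [← sub_eq_zero, ← norm_le_zero_iff]
  have hlim : Filter.Tendsto (fun k : ℕ => (K + L) * (1 / ((k : ℝ) + 1))) Filter.atTop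
      (nhds 0) := by
    simpa using (tendsto_one_div_add_atTop_nhds_zero_nat (𝕜 := ℝ)).const_mul (K + L)
  refine ge_of_tendsto' hlim fun k => ?_
  obtain ⟨c, h1, h2⟩ := h (1 / ((k : ℝ) + 1)) Nat.one_div_pos_of_nat
    (by simpa using Nat.one_div_le_one_div (α := ℝ) (Nat.zero_le k))
  calc ‖a - b‖ = ‖(a - c) - (b - c)‖ := by congr 1; ring
    _ ≤ _ := (norm_sub_le _ _).trans (add_le_add h1 h2)
    _ = _ := by ring

lemma IsExtVal.add {u v w : ℂ} (hf : PolyApprox A f) (hg : PolyApprox A g)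
    (hu : IsExtVal A z f u) (hv : IsExtVal A z g v) (hw : IsExtVal A z (f + g) w) :
    w = u + v := by
  refine eq_of_forall_close 2 2 fun ε hε _ => ?_
  obtain ⟨P, hP, hPf⟩ := hf ε hε
  obtain ⟨Q, hQ, hQg⟩ := hg ε hε
  refine ⟨P z + Q z, hw _ (hP.add hQ) _ fun x hx => ?_, ?_⟩
  · rw [Pi.add_apply, Pi.add_apply, add_sub_add_comm, two_mul]
    exact (norm_add_le _ _).trans (add_le_add (hPf x hx) (hQg x hx))
  · rw [add_sub_add_comm, two_mul]
    exact (norm_add_le _ _).trans (add_le_add (hu P hP _ hPf) (hv Q hQ _ hQg))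

lemma IsExtVal.const_smul {u w : ℂ} (c : ℂ) (hf : PolyApprox A f)
    (hu : IsExtVal A z f u) (hw : IsExtVal A z (c • f) w) : w = c * u := by
  refine eq_of_forall_close ‖c‖ ‖c‖ fun ε hε _ => ?_
  obtain ⟨P, hP, hPf⟩ := hf ε hε
  refine ⟨c * P z, hw _ (hP.const_smul c) _ fun x hx => ?_, ?_⟩
  · rw [Pi.smul_apply, Pi.smul_apply, ← smul_sub, norm_smul]
    exact mul_le_mul_of_nonneg_left (hPf x hx) (norm_nonneg _)
  · rw [← mul_sub, norm_mul]
    exact mul_le_mul_of_nonneg_left (hu P hP _ hPf) (norm_nonneg _)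

lemma norm_mul_sub_mul_le {a b p q : ℂ} {C D ε : ℝ} (ha : ‖a‖ ≤ C) (hb : ‖b‖ ≤ D)
    (hε : ε ≤ 1) (hp : ‖a - p‖ ≤ ε) (hq : ‖b - q‖ ≤ ε) :
    ‖a * b - p * q‖ ≤ (C + D + 1) * ε := by
  have h0 : 0 ≤ ε := (norm_nonneg _).trans hp
  calc ‖a * b - p * q‖ = ‖a * (b - q) + (a - p) * b - (a - p) * (b - q)‖ := by congr 1; ring
    _ ≤ ‖a‖ * ‖b - q‖ + ‖a - p‖ * ‖b‖ + ‖a - p‖ * ‖b - q‖ := by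
        refine (norm_sub_le _ _).trans (add_le_add ((norm_add_le _ _).trans_eq ?_) ?_)
        · rw [norm_mul, norm_mul]
        · rw [norm_mul]
    _ ≤ C * ε + ε * D + ε * 1 := by
        have := (norm_nonneg a).trans ha
        gcongr
        exact hq.trans hε
    _ = _ := by ring

lemma IsExtVal.mul {u v w : ℂ} {C D : ℝ} (hf : PolyApprox A f) (hg : PolyApprox A g)
    (hC : ∀ x ∈ A, ‖f x‖ ≤ C) (hD : ∀ x ∈ A, ‖g x‖ ≤ D)
    (hu : IsExtVal A z f u) (hv : IsExtVal A z g v) (hw : IsExtVal A z (f * g) w) :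
    w = u * v := by
  refine eq_of_forall_close (C + D + 1) (‖u‖ + ‖v‖ + 1) fun ε hε hε1 => ?_
  obtain ⟨P, hP, hPf⟩ := hf ε hε
  obtain ⟨Q, hQ, hQg⟩ := hg ε hε
  exact ⟨P z * Q z,
    hw _ (hP.mul hQ) _ fun x hx =>
      norm_mul_sub_mul_le (hC x hx) (hD x hx) hε1 (hPf x hx) (hQg x hx),
    norm_mul_sub_mul_le le_rfl le_rfl hε1 (hu P hP _ hPf) (hv Q hQ _ hQg)⟩

lemma IsExtVal.norm_le {w : ℂ} {C : ℝ} (hw : IsExtVal A z f w) (hC : ∀ x ∈ A, ‖f x‖ ≤ C) :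
    ‖w‖ ≤ C := by
  simpa using hw _ (.const 0) C (by simpa using hC)

end Extension

/-- If continuous polynomials are dense in `H_b(U)` and `z ∈ (U_n)̂_P`, then there
is a continuous character `φ` of `H_b(U)` dominated by the sup over `U_n` and with
`φ(f|_U) = f(z)` for every `f ∈ H_b(E)`. In particular every point of `Û_P` is an evaluation
point for `H_b(U)`. -/
theorem stmt_2 {E : Type*} [NormedAddCommGroup E] [NormedSpace ℂ E] [CompleteSpace E]
    (U : Set E) (hU : IsOpen U) (hdense : PolysDense U)
    (n : ℕ) (z : E) (hz : z ∈ polyHull (UNat U n)) :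
    ∃ φ : (E → ℂ) → ℂ, IsHbChar U φ ∧
      (∀ f : E → ℂ, MemHb U f → ∀ C : ℝ, (∀ x ∈ UNat U n, ‖f x‖ ≤ C) → ‖φ f‖ ≤ C) ∧
      ∀ f : E → ℂ, MemHb Set.univ f → φ f = f z := by
  have hA := uBounded_UNat hU n
  have happ : ∀ f, MemHb U f → PolyApprox (UNat U n) f := fun f hf => hdense f hf _ hA
  have hex : ∀ f, ∃ w, MemHb U f → IsExtVal (UNat U n) z f w := by
    intro f
    by_cases hf : MemHb U f
    · obtain ⟨w, hw⟩ := exists_isExtVal hz (happ f hf)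
      exact ⟨w, fun _ => hw⟩
    · exact ⟨0, fun h => absurd h hf⟩
  choose φ hφ using hex
  have hle : ∀ f : E → ℂ, MemHb U f → ∀ C : ℝ, (∀ x ∈ UNat U n, ‖f x‖ ≤ C) → ‖φ f‖ ≤ C :=
    fun f hf C hC => (hφ f hf).norm_le hC
  refine ⟨φ, ⟨?_, ?_, ?_, ?_, UNat U n, hA, hle⟩, hle, ?_⟩
  · have := hφ _ (.const 1) _ (.const 1) 0 (by simp)
    exact sub_eq_zero.1 (norm_le_zero_iff.1 this)
  · exact fun f g hf hg =>
      IsExtVal.add (happ f hf) (happ g hg) (hφ f hf) (hφ g hg) (hφ _ (hf.add hg))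
  · exact fun c f hf => IsExtVal.const_smul c (happ f hf) (hφ f hf) (hφ _ (hf.const_smul c))
  · intro f g hf hg
    obtain ⟨C, hC⟩ := hf.2 _ hA
    obtain ⟨D, hD⟩ := hg.2 _ hA
    exact IsExtVal.mul (happ f hf) (happ g hg) hC hD (hφ f hf) (hφ g hg) (hφ _ (hf.mul hg))
  · intro f hf
    refine eq_of_forall_close 1 1 fun ε hε _ => ?_
    -- The radius is chosen so that the ball contains both `UNat U n` and `z`.
    obtain ⟨P, hP, hPf⟩ := hf.exists_taylor (max n ‖z‖) hε
    rw [one_mul]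
    exact ⟨P z, hφ f hf.of_univ P hP ε fun x hx => hPf x (hx.2.1.trans (le_max_left _ _)),
      hPf z (le_max_right _ _)⟩
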